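/- arXiv:2506.24058 — 6 statements merged into one kernel-verified Lean document; each statement's English description precedes it below -/
import Mathlib

section
/- Let n ≥ 1, N > 0. Assume g : [0,∞) → ℝ is C¹ with g(t) > 0 and g'(t) > 0 for all t and ∫₀^∞ 1/g(τ) dτ < ∞; assume b : [0,∞) → ℝ is C¹ with b(t) > 0, b'(t) < 0 and ∫₀^∞ b(τ) dτ < ∞. Set G(t) = ½∫₀ᵗ g(τ) dτ. Then there is a constant C > 0 (depending only on b, g and N, not on ξ, s, t) such that for every ξ ∈ ℝⁿ, every 0 ≤ s ≤ t with G(t)|ξ|² ≤ N, and every twice continuously differentiable v : [0,∞) → ℂ satisfying v''(τ) + |ξ|²v(τ) + (b(τ)+g(τ)|ξ|²)v'(τ) = 0 on [s,t], one has g(t)|ξ|²|v(t)| + |v'(t)| ≤ C (g(t)/g(s)) ( g(s)|ξ|²|v(s)| + |v'(s)| ). -/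
open MeasureTheory Filter

lemma aux_sqrt_deriv (f : ℝ → ℂ) (f' : ℂ) (x ε : ℝ) (hε : 0 < ε) (hf : HasDerivAt f f' x) :
    HasDerivAt (fun y => Real.sqrt (‖f y‖ ^ 2 + ε ^ 2))
      (inner ℝ (f x) f' / Real.sqrt (‖f x‖ ^ 2 + ε ^ 2)) x := by
  have h1 := (hf.norm_sq.add_const (ε ^ 2)).sqrt (by positivity)
  convert h1 using 1
  rw [mul_div_mul_left _ _ (two_ne_zero)]

/-- The pointwise differential inequality. -/
lemma aux_ineq (r g g' b ε A B nv nw A' B' iv : ℝ) (hr : 0 ≤ r) (hg : 0 < g) (hg' : 0 < g')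
    (hb : 0 < b) (hε : 0 < ε) (hnv : 0 ≤ nv) (hnw : 0 ≤ nw)
    (hB : 0 < B) (hnA : nv ≤ A) (hnB : nw ≤ B) (hεB : ε ≤ B) (hB2 : B ^ 2 = nw ^ 2 + ε ^ 2)
    (hA' : A' ≤ nw) (hiv : |iv| ≤ nw * nv)
    (hB' : B' = (-(r * iv) - (b + g * r) * nw ^ 2) / B) :
    -(1 / g) * (r * A + B / g) + (r * A' + (B' * g - B * g') / g ^ 2) ≤ ε * ((b + g * r) / g) := by
  have hc : 0 < b + g * r := by positivity
  have h1 : B' ≤ r * A - (b + g * r) * B + (b + g * r) * ε := by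
    rw [hB', div_le_iff₀ hB]
    have h2 : -(r * iv) ≤ r * (A * B) := by
      have : -iv ≤ A * B := by
        have := neg_abs_le iv
        have : nw * nv ≤ B * A := mul_le_mul hnB hnA hnv hB.le
        linarith
      nlinarith
    have h3 : (b + g * r) * ε ^ 2 ≤ (b + g * r) * (ε * B) := by
      apply mul_le_mul_of_nonneg_left _ hc.le
      nlinarith
    have h4 : nw ^ 2 = B ^ 2 - ε ^ 2 := by linarith
    rw [h4]
    nlinarith
  have h5 : r * A' ≤ r * B := mul_le_mul_of_nonneg_left (by linarith) hr
  have e : -(1 / g) * (r * A + B / g) + (r * A' + (B' * g - B * g') / g ^ 2)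
      = r * A' + (B' - r * A) / g - B / g ^ 2 - B * g' / g ^ 2 := by
    field_simp
    ring
  rw [e]
  have h6 : (B' - r * A) / g ≤ (-(g * r * B) + (b + g * r) * ε) / g := by
    apply div_le_div_of_nonneg_right _ hg.le
    nlinarith [mul_pos hb hB]
  have h7 : (-(g * r * B) + (b + g * r) * ε) / g = - (r * B) + ε * ((b + g * r) / g) := by
    field_simp
  have h8 : 0 ≤ B / g ^ 2 := by positivity
  have h9 : 0 ≤ B * g' / g ^ 2 := by positivity
  linarith

/-- Proposition 2.3 of the paper: estimate in the pseudo-differential zone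
`Z_pd(N) = {(t,ξ) : G(t)|ξ|² ≤ N}` for the scattering case. -/
theorem pseudodifferential_zone_estimate_scattering
    (n : ℕ) (hn : 1 ≤ n) (N : ℝ) (hN : 0 < N)
    (b g G : ℝ → ℝ)
    (hg_smooth : ContDiff ℝ 1 g)
    (hg_pos : ∀ t : ℝ, 0 ≤ t → 0 < g t)
    (hg_deriv_pos : ∀ t : ℝ, 0 ≤ t → 0 < deriv g t)
    (hg_int : IntegrableOn (fun t => (g t)⁻¹) (Set.Ici (0 : ℝ)))
    (hb_smooth : ContDiff ℝ 1 b)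
    (hb_pos : ∀ t : ℝ, 0 ≤ t → 0 < b t)
    (hb_deriv_neg : ∀ t : ℝ, 0 ≤ t → deriv b t < 0)
    (hb_int : IntegrableOn b (Set.Ici (0 : ℝ)))
    (hG : ∀ t : ℝ, G t = (1 / 2) * ∫ τ in (0 : ℝ)..t, g τ) :
    ∃ C : ℝ, 0 < C ∧
      ∀ (ξ : EuclideanSpace ℝ (Fin n)) (s t : ℝ), 0 ≤ s → s ≤ t →
        G t * ‖ξ‖ ^ 2 ≤ N →
        ∀ v : ℝ → ℂ, ContDiff ℝ 2 v →
          (∀ τ ∈ Set.Icc s t,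
            deriv (deriv v) τ + ((‖ξ‖ ^ 2 : ℝ) : ℂ) * v τ +
              ((b τ + g τ * ‖ξ‖ ^ 2 : ℝ) : ℂ) * deriv v τ = 0) →
          g t * ‖ξ‖ ^ 2 * ‖v t‖ + ‖deriv v t‖ ≤
            C * (g t / g s) * (g s * ‖ξ‖ ^ 2 * ‖v s‖ + ‖deriv v s‖) := by
  have hgc : Continuous g := hg_smooth.continuous
  have hbc : Continuous b := hb_smooth.continuous
  set I : ℝ := ∫ x in Set.Ici (0 : ℝ), (g x)⁻¹ with hI
  set h : ℝ → ℝ := fun τ => ∫ x in (0 : ℝ)..τ, (g x)⁻¹ with hh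
  have hii : ∀ a c : ℝ, 0 ≤ a → 0 ≤ c → IntervalIntegrable (fun x => (g x)⁻¹) volume a c := by
    intro a c ha hc
    rw [intervalIntegrable_iff]
    apply hg_int.mono_set
    intro x hx
    exact le_trans (le_min ha hc) hx.1.le
  have hder : ∀ τ, 0 ≤ τ → HasDerivAt h (g τ)⁻¹ τ := by
    intro τ hτ
    apply intervalIntegral.integral_hasDerivAt_right (hii 0 τ le_rfl hτ)
    · exact (hgc.measurable.inv.stronglyMeasurable).stronglyMeasurableAtFilter
    · exact hgc.continuousAt.inv₀ (hg_pos τ hτ).ne'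
  have hdiff : ∀ s t, 0 ≤ s → s ≤ t → h t - h s ≤ I := by
    intro s t hs hst
    have h1 : h t - h s = ∫ x in s..t, (g x)⁻¹ :=
      intervalIntegral.integral_interval_sub_left (hii 0 t le_rfl (hs.trans hst)) (hii 0 s le_rfl hs)
    rw [h1, intervalIntegral.integral_of_le hst]
    apply setIntegral_mono_set hg_int
    · filter_upwards [ae_restrict_mem measurableSet_Ici] with x hx
      exact (inv_pos.2 (hg_pos x hx)).le
    · exact (show Set.Ioc s t ⊆ Set.Ici 0 from fun x hx => hs.trans hx.1.le).eventuallyLE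
  refine ⟨Real.exp I, Real.exp_pos _, ?_⟩
  intro ξ s t hs hst _ v hv heq
  set r : ℝ := ‖ξ‖ ^ 2 with hrdef
  have hr : 0 ≤ r := by positivity
  have hpos : ∀ τ ∈ Set.Icc s t, 0 ≤ τ := fun τ hτ => hs.trans hτ.1
  have hvd : ∀ τ, HasDerivAt v (deriv v τ) τ := fun τ =>
    (hv.differentiable (by norm_num) τ).hasDerivAt
  have hv1 : ContDiff ℝ 1 (deriv v) := by
    have : ContDiff ℝ (1 + 1) v := by simpa [one_add_one_eq_two] using hv
    exact (contDiff_succ_iff_deriv.1 this).2.2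
  have hwd : ∀ τ, HasDerivAt (deriv v) (deriv (deriv v) τ) τ := fun τ =>
    (hv1.differentiable (by norm_num) τ).hasDerivAt
  have hgd : ∀ τ, HasDerivAt g (deriv g τ) τ := fun τ =>
    (hg_smooth.differentiable (by norm_num) τ).hasDerivAt
  have hhc : ContinuousOn h (Set.Icc s t) := fun τ hτ =>
    (hder τ (hpos τ hτ)).continuousAt.continuousWithinAt
  obtain ⟨K, hK⟩ := isCompact_Icc.exists_bound_of_continuousOn
    (f := fun τ => Real.exp (-h τ) * ((b τ + g τ * r) / g τ)) (s := Set.Icc s t) (by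
      apply ContinuousOn.mul
      · exact Real.continuous_exp.comp_continuousOn hhc.neg
      · apply ContinuousOn.div (by fun_prop) (by fun_prop)
        exact fun τ hτ => (hg_pos τ (hpos τ hτ)).ne')
  have key : ∀ ε : ℝ, 0 < ε →
      Real.exp (-h t) * (r * Real.sqrt (‖v t‖ ^ 2 + ε ^ 2)
          + Real.sqrt (‖deriv v t‖ ^ 2 + ε ^ 2) / g t) - ε * K * t ≤
      Real.exp (-h s) * (r * Real.sqrt (‖v s‖ ^ 2 + ε ^ 2)
          + Real.sqrt (‖deriv v s‖ ^ 2 + ε ^ 2) / g s) - ε * K * s := by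
    intro ε hε
    have hD : ∀ τ ∈ Set.Icc s t, ∃ d ≤ 0, HasDerivAt (fun τ =>
      Real.exp (-h τ) * (r * Real.sqrt (‖v τ‖ ^ 2 + ε ^ 2)
          + Real.sqrt (‖deriv v τ‖ ^ 2 + ε ^ 2) / g τ) - ε * K * τ) d τ := by
      intro τ hτ
      have hg0 := hg_pos τ (hpos τ hτ)
      have dA := aux_sqrt_deriv v _ τ ε hε (hvd τ)
      have dB := aux_sqrt_deriv (deriv v) _ τ ε hε (hwd τ)
      have dh := (hder τ (hpos τ hτ)).neg.exp
      have dF := (dh.mul ((dA.const_mul r).add (dB.div (hgd τ) hg0.ne'))).sub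
        ((hasDerivAt_id τ).const_mul (ε * K))
      refine ⟨_, ?_, dF⟩
      set A := Real.sqrt (‖v τ‖ ^ 2 + ε ^ 2) with hA
      set B := Real.sqrt (‖deriv v τ‖ ^ 2 + ε ^ 2) with hB
      have hA0 : 0 < A := Real.sqrt_pos.2 (by positivity)
      have hB0 : 0 < B := Real.sqrt_pos.2 (by positivity)
      have hnA : ‖v τ‖ ≤ A := Real.le_sqrt_of_sq_le (by nlinarith)
      have hnB : ‖deriv v τ‖ ≤ B := Real.le_sqrt_of_sq_le (by nlinarith)
      have hεB : ε ≤ B := Real.le_sqrt_of_sq_le (by nlinarith [norm_nonneg (deriv v τ)])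
      have hB2 : B ^ 2 = ‖deriv v τ‖ ^ 2 + ε ^ 2 := Real.sq_sqrt (by positivity)
      have hi : inner ℝ (deriv v τ) (deriv (deriv v) τ)
          = -(r * inner ℝ (deriv v τ) (v τ)) - (b τ + g τ * r) * ‖deriv v τ‖ ^ 2 := by
        have e : deriv (deriv v) τ = -(r • v τ) - (b τ + g τ * r) • deriv v τ := by
          have := heq τ hτ
          rw [Complex.real_smul, Complex.real_smul]
          linear_combination this
        rw [e, inner_sub_right, inner_neg_right, inner_smul_right, inner_smul_right,
          real_inner_self_eq_norm_sq]
      have hfin := aux_ineq r (g τ) (deriv g τ) (b τ) ε A B ‖v τ‖ ‖deriv v τ‖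
        (inner ℝ (v τ) (deriv v τ) / A) (inner ℝ (deriv v τ) (deriv (deriv v) τ) / B)
        (inner ℝ (deriv v τ) (v τ)) hr hg0 (hg_deriv_pos τ (hpos τ hτ)) (hb_pos τ (hpos τ hτ)) hε
        (norm_nonneg _) (norm_nonneg _) hB0 hnA hnB hεB hB2
        (by
          rw [div_le_iff₀ hA0]
          have := real_inner_le_norm (v τ) (deriv v τ)
          nlinarith [norm_nonneg (deriv v τ)])
        (abs_real_inner_le_norm _ _) (by rw [hi])
      have hKτ := (le_abs_self _).trans (hK τ hτ)
      have hm := mul_le_mul_of_nonneg_left hfin (Real.exp_pos (-h τ)).le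
      have hm2 := mul_le_mul_of_nonneg_left hKτ hε.le
      simp only [Pi.add_apply, Pi.div_apply, Pi.neg_apply, ← hA, ← hB]
      rw [one_div] at hm
      linarith
    have hanti : AntitoneOn (fun τ =>
      Real.exp (-h τ) * (r * Real.sqrt (‖v τ‖ ^ 2 + ε ^ 2)
          + Real.sqrt (‖deriv v τ‖ ^ 2 + ε ^ 2) / g τ) - ε * K * τ) (Set.Icc s t) := by
      apply antitoneOn_of_deriv_nonpos (convex_Icc s t)
      · intro τ hτ
        obtain ⟨d, -, hd⟩ := hD τ hτ
        exact hd.continuousAt.continuousWithinAt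
      · intro τ hτ
        obtain ⟨d, -, hd⟩ := hD τ (interior_subset hτ)
        exact hd.differentiableAt.differentiableWithinAt
      · intro τ hτ
        obtain ⟨d, hd0, hd⟩ := hD τ (interior_subset hτ)
        rw [hd.deriv]
        exact hd0
    exact hanti (Set.left_mem_Icc.2 hst) (Set.right_mem_Icc.2 hst) hst
  have lim : ∀ τ : ℝ, Tendsto (fun ε : ℝ => Real.exp (-h τ) * (r * Real.sqrt (‖v τ‖ ^ 2 + ε ^ 2)
          + Real.sqrt (‖deriv v τ‖ ^ 2 + ε ^ 2) / g τ) - ε * K * τ) (nhdsWithin 0 (Set.Ioi 0))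
          (nhds (Real.exp (-h τ) * (r * ‖v τ‖ + ‖deriv v τ‖ / g τ))) := by
    intro τ
    have hc : Continuous (fun ε : ℝ => Real.exp (-h τ) * (r * Real.sqrt (‖v τ‖ ^ 2 + ε ^ 2)
          + Real.sqrt (‖deriv v τ‖ ^ 2 + ε ^ 2) / g τ) - ε * K * τ) := by
      fun_prop
    have := (hc.tendsto 0).mono_left (nhdsWithin_le_nhds (s := Set.Ioi 0))
    simpa [Real.sqrt_sq] using this
  have hmain := le_of_tendsto_of_tendsto (lim t) (lim s)
    (by filter_upwards [self_mem_nhdsWithin] with ε hε using key ε hε)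
  have hgs := hg_pos s hs
  have hgt := hg_pos t (hs.trans hst)
  have h1 : r * ‖v t‖ + ‖deriv v t‖ / g t ≤ Real.exp I * (r * ‖v s‖ + ‖deriv v s‖ / g s) := by
    have h2 : r * ‖v t‖ + ‖deriv v t‖ / g t
        ≤ Real.exp (h t - h s) * (r * ‖v s‖ + ‖deriv v s‖ / g s) := by
      have := mul_le_mul_of_nonneg_left hmain (Real.exp_pos (h t)).le
      rw [← mul_assoc, ← mul_assoc, ← Real.exp_add, ← Real.exp_add] at this
      simpa [sub_eq_add_neg] using this
    refine h2.trans (mul_le_mul_of_nonneg_right (Real.exp_le_exp.2 (hdiff s t hs hst)) ?_)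
    positivity
  have h3 := mul_le_mul_of_nonneg_left h1 hgt.le
  calc g t * r * ‖v t‖ + ‖deriv v t‖ = g t * (r * ‖v t‖ + ‖deriv v t‖ / g t) := by
        field_simp
    _ ≤ _ := h3
    _ = _ := by
        field_simp
end

section
/- Let b, h : [0,∞) → ℝ be continuous and nonnegative, let K ≥ 0 with h(t) ≤ K·b(t) for all t ≥ 0, let c ∈ (0,1) with (1+K)c < 1, and let t₀ > 0 be such that t·b(t) ≤ c for all t ≥ t₀. Define δ(t) = exp(∫₀ᵗ (b(τ)+h(τ)) dτ). Then: (i) there is a constant C > 0, depending only on c, K, t₀ and b restricted to [0,t₀] (in particular independent of h subject to h ≤ Kb), such that for all t ≥ t₀, t/δ(t) ≤ ∫₀ᵗ 1/δ(τ) dτ ≤ C·t/δ(t); and (ii) the function t ↦ t/δ(t) is strictly increasing on [t₀,∞), since d/dt (t/δ(t)) = (1 − t(b(t)+h(t)))/δ(t) > 0 for t ≥ t₀. -/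
open MeasureTheory Filter

/-- The lemma after Proposition 3.8 of the paper, used in the dissipative zone: with
`δ(t) = exp(∫₀ᵗ (b+h))` one has `∫₀ᵗ dτ/δ(τ) ∼ t/δ(t)`, and `t/δ(t)` is strictly
increasing for `t ≥ t₀`. -/
theorem dissipative_zone_delta_asymptotics
    (b : ℝ → ℝ) (hb_cont : Continuous b) (hb_nonneg : ∀ t : ℝ, 0 ≤ t → 0 ≤ b t)
    (K : ℝ) (hK : 0 ≤ K) (c : ℝ) (hc : c ∈ Set.Ioo (0 : ℝ) 1)
    (hKc : (1 + K) * c < 1)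
    (t₀ : ℝ) (ht₀ : 0 < t₀) (htb : ∀ t : ℝ, t₀ ≤ t → t * b t ≤ c) :
    ∃ C : ℝ, 0 < C ∧
      ∀ h : ℝ → ℝ, Continuous h → (∀ t : ℝ, 0 ≤ t → 0 ≤ h t) →
        (∀ t : ℝ, 0 ≤ t → h t ≤ K * b t) →
        (∀ t : ℝ, t₀ ≤ t →
          t / Real.exp (∫ τ in (0 : ℝ)..t, (b τ + h τ)) ≤
              (∫ τ in (0 : ℝ)..t, (Real.exp (∫ θ in (0 : ℝ)..τ, (b θ + h θ)))⁻¹) ∧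
            (∫ τ in (0 : ℝ)..t, (Real.exp (∫ θ in (0 : ℝ)..τ, (b θ + h θ)))⁻¹) ≤
              C * (t / Real.exp (∫ τ in (0 : ℝ)..t, (b τ + h τ)))) ∧
        StrictMonoOn (fun x => x / Real.exp (∫ τ in (0 : ℝ)..x, (b τ + h τ))) (Set.Ici t₀) ∧
        ∀ t : ℝ, t₀ ≤ t →
          HasDerivAt (fun x => x / Real.exp (∫ τ in (0 : ℝ)..x, (b τ + h τ)))
              ((1 - t * (b t + h t)) / Real.exp (∫ τ in (0 : ℝ)..t, (b τ + h τ))) t ∧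
            0 < (1 - t * (b t + h t)) / Real.exp (∫ τ in (0 : ℝ)..t, (b τ + h τ)) := by
  have ha : 0 < 1 - (1 + K) * c := by linarith
  set a := 1 - (1 + K) * c with ha_def
  set E := Real.exp ((1 + K) * ∫ τ in (0 : ℝ)..t₀, b τ) with hE
  have hEpos : 0 < E := Real.exp_pos _
  refine ⟨1 / a + E, by positivity, ?_⟩
  intro h hh hh0 hhK
  have hcont : Continuous (fun τ => b τ + h τ) := hb_cont.add hh
  have hnn : ∀ t : ℝ, 0 ≤ t → 0 ≤ b t + h t := fun t ht =>
    add_nonneg (hb_nonneg t ht) (hh0 t ht)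
  obtain ⟨I, hI⟩ : ∃ I : ℝ → ℝ, I = fun x => ∫ τ in (0 : ℝ)..x, (b τ + h τ) := ⟨_, rfl⟩
  have hIx : ∀ x : ℝ, (∫ τ in (0 : ℝ)..x, (b τ + h τ)) = I x := fun x => by rw [hI]
  simp only [hIx]
  have hId : ∀ t, HasDerivAt I (b t + h t) t := by
    intro t
    rw [hI]
    exact intervalIntegral.integral_hasDerivAt_right (hcont.intervalIntegrable _ _)
      (hcont.stronglyMeasurableAtFilter _ _) hcont.continuousAt
  have hI0 : I 0 = 0 := by rw [← hIx]; simp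
  have hIc : Continuous I := continuous_iff_continuousAt.2 fun t => (hId t).continuousAt
  have hImono : MonotoneOn I (Set.Ici 0) := by
    apply monotoneOn_of_deriv_nonneg (convex_Ici 0) hIc.continuousOn
    · exact fun t _ => (hId t).differentiableAt.differentiableWithinAt
    · intro t ht
      rw [interior_Ici] at ht
      rw [(hId t).deriv]
      exact hnn t (le_of_lt ht)
  have hFd : ∀ t, HasDerivAt (fun x => x / Real.exp (I x))
      ((1 - t * (b t + h t)) / Real.exp (I t)) t := by
    intro t
    have h1 := (hasDerivAt_id t).div (hId t).exp (Real.exp_ne_zero _)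
    refine HasDerivAt.congr_deriv h1 ?_
    have := Real.exp_ne_zero (I t)
    try simp only [id]
    field_simp
  have hkey : ∀ t, t₀ ≤ t → a ≤ 1 - t * (b t + h t) := by
    intro t ht
    have h0 : 0 ≤ t := by linarith
    have h1 := mul_le_mul_of_nonneg_left (hhK t h0) h0
    have h2 := mul_le_mul_of_nonneg_left (htb t ht) hK
    rw [ha_def]
    nlinarith [htb t ht]
  have hFpos : ∀ t, t₀ ≤ t → 0 < (1 - t * (b t + h t)) / Real.exp (I t) := fun t ht =>
    div_pos (lt_of_lt_of_le ha (hkey t ht)) (Real.exp_pos _)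
  have hFc : Continuous (fun x => x / Real.exp (I x)) :=
    continuous_iff_continuousAt.2 fun t => (hFd t).continuousAt
  have hmono : StrictMonoOn (fun x => x / Real.exp (I x)) (Set.Ici t₀) := by
    apply strictMonoOn_of_deriv_pos (convex_Ici t₀) hFc.continuousOn
    intro t ht
    rw [interior_Ici] at ht
    rw [(hFd t).deriv]
    exact hFpos t (le_of_lt ht)
  have hdc : Continuous (fun τ => (Real.exp (I τ))⁻¹) :=
    (Real.continuous_exp.comp hIc).inv₀ fun t => Real.exp_ne_zero _
  have hGd : ∀ t, HasDerivAt (fun x => ∫ τ in (0 : ℝ)..x, (Real.exp (I τ))⁻¹)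
      (Real.exp (I t))⁻¹ t := fun t =>
    intervalIntegral.integral_hasDerivAt_right (hdc.intervalIntegrable _ _)
      (hdc.stronglyMeasurableAtFilter _ _) hdc.continuousAt
  refine ⟨?_, hmono, fun t ht => ⟨hFd t, hFpos t ht⟩⟩
  intro t ht
  have ht0 : 0 ≤ t := by linarith
  constructor
  · have h1 : (∫ τ in (0 : ℝ)..t, (Real.exp (I t))⁻¹) ≤
        ∫ τ in (0 : ℝ)..t, (Real.exp (I τ))⁻¹ := by
      apply intervalIntegral.integral_mono_on ht0 (by simp) (hdc.intervalIntegrable _ _)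
      intro x hx
      apply inv_anti₀ (Real.exp_pos _)
      exact Real.exp_le_exp.2 (hImono hx.1 ht0 hx.2)
    simpa [div_eq_mul_inv] using h1
  · have hWd : ∀ s, HasDerivAt (fun x => x / Real.exp (I x) -
        a * ∫ τ in (0 : ℝ)..x, (Real.exp (I τ))⁻¹)
        ((1 - s * (b s + h s)) / Real.exp (I s) - a * (Real.exp (I s))⁻¹) s := fun s =>
      (hFd s).sub ((hGd s).const_mul a)
    have hW : MonotoneOn (fun x => x / Real.exp (I x) -
        a * ∫ τ in (0 : ℝ)..x, (Real.exp (I τ))⁻¹) (Set.Ici t₀) := by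
      apply monotoneOn_of_deriv_nonneg (convex_Ici t₀)
      · exact fun s _ => (hWd s).continuousAt.continuousWithinAt
      · exact fun s _ => (hWd s).differentiableAt.differentiableWithinAt
      · intro s hs
        rw [interior_Ici] at hs
        rw [(hWd s).deriv, div_eq_mul_inv, ← sub_mul]
        have := hkey s (le_of_lt hs)
        exact mul_nonneg (by linarith) (inv_nonneg.2 (Real.exp_pos _).le)
    have h1 := hW (Set.mem_Ici.2 le_rfl) (Set.mem_Ici.2 ht) ht
    have h2 := hmono.monotoneOn (Set.mem_Ici.2 le_rfl) (Set.mem_Ici.2 ht) ht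
    simp only at h1 h2
    have hG0 : (∫ τ in (0 : ℝ)..t₀, (Real.exp (I τ))⁻¹) ≤ t₀ := by
      have : (∫ τ in (0 : ℝ)..t₀, (Real.exp (I τ))⁻¹) ≤ ∫ τ in (0 : ℝ)..t₀, (1 : ℝ) := by
        apply intervalIntegral.integral_mono_on ht₀.le (hdc.intervalIntegrable _ _) (by simp)
        intro x hx
        apply inv_le_one_of_one_le₀
        apply Real.one_le_exp
        rw [← hI0]
        exact hImono (Set.mem_Ici.2 le_rfl) hx.1 hx.1
      simpa using this
    have hIt : I t₀ ≤ (1 + K) * ∫ τ in (0 : ℝ)..t₀, b τ := by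
      rw [← hIx, ← intervalIntegral.integral_const_mul]
      apply intervalIntegral.integral_mono_on ht₀.le (hcont.intervalIntegrable _ _)
        ((continuous_const.mul hb_cont).intervalIntegrable _ _)
      intro x hx
      have := hhK x hx.1
      change b x + h x ≤ (1 + K) * b x
      linarith
    have hE0 : t₀ ≤ E * (t₀ / Real.exp (I t₀)) := by
      rw [← mul_div_assoc, le_div_iff₀ (Real.exp_pos _), mul_comm E]
      exact mul_le_mul_of_nonneg_left (Real.exp_le_exp.2 hIt) ht₀.le
    have hF0 : 0 ≤ t₀ / Real.exp (I t₀) := by positivity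
    have h3 := mul_le_mul_of_nonneg_left h2 hEpos.le
    have h4 : (∫ τ in (0 : ℝ)..t, (Real.exp (I τ))⁻¹) -
        (∫ τ in (0 : ℝ)..t₀, (Real.exp (I τ))⁻¹) ≤ (t / Real.exp (I t)) / a := by
      rw [le_div_iff₀ ha]
      linarith
    have h5 : (1 / a + E) * (t / Real.exp (I t)) =
        (t / Real.exp (I t)) / a + E * (t / Real.exp (I t)) := by ring
    rw [h5]
    linarith
end

section
/- Let t₀ ∈ ℝ and t₀ < T₀ ≤ ∞. Let E : [t₀,T₀) → [0,∞) be differentiable and non-increasing, and let f : [t₀,T₀) → [0,∞) be continuous with f·E integrable on [t₀,T₀). Suppose there is C > 0 such that ∫ₛ^{T₀} f(τ)E(τ) dτ ≤ C·E(s) for all s ∈ [t₀,T₀). Then for every ε ∈ (0,1) and every t ∈ [t₀,T₀) one has E(t) ≤ (E(t₀)/(1−ε))·exp( −(ε/C) ∫_{t₀}ᵗ f(τ) dτ ). -/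
open MeasureTheory Filter

/-- Primitive of a continuous function: continuity on the interval and interior derivative. -/
lemma primitive_facts (a b : ℝ) (hab : a ≤ b) (g : ℝ → ℝ) (hg : ContinuousOn g (Set.Icc a b)) :
    ContinuousOn (fun s => ∫ τ in a..s, g τ) (Set.Icc a b) ∧
    ∀ s ∈ Set.Ioo a b, HasDerivAt (fun s => ∫ τ in a..s, g τ) (g s) s := by
  constructor
  · have h := intervalIntegral.continuousOn_primitive_interval (μ := volume) (f := g)
      (a := a) (b := b) (by rw [Set.uIcc_of_le hab]; exact hg.integrableOn_Icc)
    rwa [Set.uIcc_of_le hab] at h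
  · intro s hs
    apply intervalIntegral.integral_hasDerivAt_right
    · apply ContinuousOn.intervalIntegrable
      rw [Set.uIcc_of_le hs.1.le]
      exact hg.mono (Set.Icc_subset_Icc le_rfl hs.2.le)
    · exact (hg.mono Set.Ioo_subset_Icc_self).stronglyMeasurableAtFilter isOpen_Ioo s hs
    · exact hg.continuousAt (Icc_mem_nhds hs.1 hs.2)

/-- Lemma `Lemma:Effective-integrable-EM7-Zdiss` of the paper (from
[JuniordaLuzNoneffective, Lemma 2.1]): a Gronwall-type lemma converting integral
energy bounds into exponential decay. -/
theorem gronwall_type_energy_decay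
    (t₀ : ℝ) (T₀ : EReal) (hT : (t₀ : EReal) < T₀)
    (E f : ℝ → ℝ)
    (hE_diff : DifferentiableOn ℝ E {x : ℝ | t₀ ≤ x ∧ (x : EReal) < T₀})
    (hE_nonneg : ∀ x : ℝ, t₀ ≤ x → (x : EReal) < T₀ → 0 ≤ E x)
    (hE_anti : AntitoneOn E {x : ℝ | t₀ ≤ x ∧ (x : EReal) < T₀})
    (hf_cont : ContinuousOn f {x : ℝ | t₀ ≤ x ∧ (x : EReal) < T₀})
    (hf_nonneg : ∀ x : ℝ, t₀ ≤ x → (x : EReal) < T₀ → 0 ≤ f x)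
    (hfE_int : IntegrableOn (fun τ => f τ * E τ) {x : ℝ | t₀ ≤ x ∧ (x : EReal) < T₀})
    (C : ℝ) (hC : 0 < C)
    (hbound : ∀ s : ℝ, t₀ ≤ s → (s : EReal) < T₀ →
      (∫ τ in {x : ℝ | s ≤ x ∧ (x : EReal) < T₀}, f τ * E τ) ≤ C * E s) :
    ∀ ε : ℝ, 0 < ε → ε < 1 →
      ∀ t : ℝ, t₀ ≤ t → (t : EReal) < T₀ →
        E t ≤ (E t₀ / (1 - ε)) * Real.exp (-(ε / C) * ∫ τ in t₀..t, f τ) := by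
  intro ε hε hε1 t ht htT
  have hsub : Set.Icc t₀ t ⊆ {x : ℝ | t₀ ≤ x ∧ (x : EReal) < T₀} := fun x hx =>
    ⟨hx.1, lt_of_le_of_lt (EReal.coe_le_coe_iff.2 hx.2) htT⟩
  have hfc := hf_cont.mono hsub
  have hfEc : ContinuousOn (fun τ => f τ * E τ) (Set.Icc t₀ t) :=
    hfc.mul (hE_diff.continuousOn.mono hsub)
  obtain ⟨hF1, hF2⟩ := primitive_facts t₀ t ht f hfc
  obtain ⟨hG1, hG2⟩ := primitive_facts t₀ t ht _ hfEc
  set G0 := ∫ τ in {x : ℝ | t₀ ≤ x ∧ (x : EReal) < T₀}, f τ * E τ with hG0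
  set F : ℝ → ℝ := fun s => ∫ τ in t₀..s, f τ with hF
  set P : ℝ → ℝ := fun s => ∫ τ in t₀..s, f τ * E τ with hP
  have hmeas : ∀ s : ℝ, MeasurableSet {x : ℝ | s ≤ x ∧ (x : EReal) < T₀} := fun s =>
    (measurableSet_le measurable_const measurable_id).inter
      (measurableSet_lt measurable_coe_real_ereal measurable_const)
  have hsplit : ∀ s ∈ Set.Icc t₀ t,
      G0 - P s = ∫ τ in {x : ℝ | s ≤ x ∧ (x : EReal) < T₀}, f τ * E τ := by
    intro s hs
    have hU : {x : ℝ | t₀ ≤ x ∧ (x : EReal) < T₀}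
        = Set.Ico t₀ s ∪ {x : ℝ | s ≤ x ∧ (x : EReal) < T₀} := by
      ext x
      simp only [Set.mem_setOf_eq, Set.mem_union, Set.mem_Ico]
      constructor
      · rintro ⟨h1, h2⟩
        rcases lt_or_ge x s with h | h
        · exact Or.inl ⟨h1, h⟩
        · exact Or.inr ⟨h, h2⟩
      · rintro (⟨h1, h2⟩ | ⟨h1, h2⟩)
        · exact hsub ⟨h1, h2.le.trans hs.2⟩
        · exact ⟨hs.1.trans h1, h2⟩
    have hD : Disjoint (Set.Ico t₀ s) {x : ℝ | s ≤ x ∧ (x : EReal) < T₀} := by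
      rw [Set.disjoint_left]
      rintro x ⟨_, h1⟩ ⟨h2, _⟩
      exact absurd h1 (not_lt.2 h2)
    have hi := hfE_int
    rw [hU] at hi
    have : G0 = P s + ∫ τ in {x : ℝ | s ≤ x ∧ (x : EReal) < T₀}, f τ * E τ := by
      rw [hG0, hU, setIntegral_union hD (hmeas s) hi.left_of_union hi.right_of_union]
      simp only [hP]
      rw [intervalIntegral.integral_of_le hs.1, integral_Ico_eq_integral_Ioo,
        integral_Ioc_eq_integral_Ioo]
    linarith
  have hδ : 0 < ε / C := div_pos hε hC
  set δ := ε / C with hδdef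
  have hδC : δ * C = ε := by rw [hδdef]; field_simp
  set Φ : ℝ → ℝ := fun s => (1 - ε) * E t * (Real.exp (δ * F s) - 1)
    + δ * (Real.exp (δ * F s) * (G0 - P s)) with hΦ
  have hder : ∀ s ∈ Set.Ioo t₀ t, HasDerivAt Φ
      ((1 - ε) * E t * (Real.exp (δ * F s) * (δ * f s))
        + δ * ((Real.exp (δ * F s) * (δ * f s)) * (G0 - P s)
          + Real.exp (δ * F s) * (-(f s * E s)))) s := by
    intro s hs
    have he : HasDerivAt (fun s => Real.exp (δ * F s)) (Real.exp (δ * F s) * (δ * f s)) s :=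
      ((hF2 s hs).const_mul δ).exp
    exact ((he.sub_const 1).const_mul _).add ((he.mul ((hG2 s hs).const_sub G0)).const_mul δ)
  have hanti : AntitoneOn Φ (Set.Icc t₀ t) := by
    apply antitoneOn_of_deriv_nonpos (convex_Icc _ _)
    · have he : ContinuousOn (fun s => Real.exp (δ * F s)) (Set.Icc t₀ t) :=
        (continuousOn_const.mul hF1).rexp
      exact (continuousOn_const.mul (he.sub continuousOn_const)).add
        (continuousOn_const.mul (he.mul (continuousOn_const.sub hG1)))
    · rw [interior_Icc]
      exact fun s hs => (hder s hs).differentiableAt.differentiableWithinAt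
    · rw [interior_Icc]
      intro s hs
      rw [(hder s hs).deriv]
      have hsI : s ∈ Set.Icc t₀ t := Set.Ioo_subset_Icc_self hs
      have hsS := hsub hsI
      have hb := hbound s hsS.1 hsS.2
      rw [← hsplit s hsI] at hb
      have hEE : E t ≤ E s := hE_anti hsS ⟨ht, htT⟩ hs.2.le
      have h1 : (1 - ε) * E t ≤ (1 - ε) * E s :=
        mul_le_mul_of_nonneg_left hEE (by linarith)
      have h2 : δ * (G0 - P s) ≤ ε * E s := by
        have := mul_le_mul_of_nonneg_left hb hδ.le
        rwa [← mul_assoc, hδC] at this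
      have h3 : 0 ≤ Real.exp (δ * F s) * (δ * f s) :=
        mul_nonneg (Real.exp_pos _).le (mul_nonneg hδ.le (hf_nonneg s hsS.1 hsS.2))
      have h4 : (1 - ε) * E t + δ * (G0 - P s) - E s ≤ 0 := by linarith
      have := mul_nonpos_of_nonneg_of_nonpos h3 h4
      linarith
  have hfin := hanti ⟨le_rfl, ht⟩ ⟨ht, le_rfl⟩ ht
  have hF0 : F t₀ = 0 := by simp [hF]
  have hP0 : P t₀ = 0 := by simp [hP]
  simp only [hΦ, hF0, hP0, mul_zero, Real.exp_zero, sub_self, sub_zero, one_mul, zero_add] at hfin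
  have hGt : 0 ≤ G0 - P t := by
    rw [hsplit t ⟨ht, le_rfl⟩]
    refine setIntegral_nonneg (hmeas t) ?_
    rintro x ⟨hx1, hx2⟩
    exact mul_nonneg (hf_nonneg x (ht.trans hx1) hx2) (hE_nonneg x (ht.trans hx1) hx2)
  have hG0b : δ * G0 ≤ ε * E t₀ := by
    have := mul_le_mul_of_nonneg_left (hbound t₀ le_rfl hT) hδ.le
    rwa [← mul_assoc, hδC] at this
  have hEt : E t ≤ E t₀ := hE_anti ⟨le_rfl, hT⟩ ⟨ht, htT⟩ ht
  have h5 : 0 ≤ δ * (Real.exp (δ * F t) * (G0 - P t)) := by positivity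
  have h6 : (1 - ε) * E t ≤ (1 - ε) * E t₀ := mul_le_mul_of_nonneg_left hEt (by linarith)
  have key : (1 - ε) * E t * Real.exp (δ * F t) ≤ E t₀ := by linarith
  change E t ≤ E t₀ / (1 - ε) * Real.exp (-δ * F t)
  rw [neg_mul, Real.exp_neg, ← div_eq_mul_inv, div_div,
    le_div_iff₀ (mul_pos (by linarith) (Real.exp_pos _))]
  linarith
end

section
/- Let ρ > 0, let [t₁,t₂] ⊂ ℝ be a compact interval, let b̃ : [t₁,t₂] → (0,∞) be continuous, and let v : [t₁,t₂] → ℂ be twice continuously differentiable with v''(t) + ρ²v(t) + b̃(t)v'(t) = 0 on [t₁,t₂]. Let K : [t₁,t₂] → [0,∞) be C¹ and suppose there are λ₁, λ₂, λ₃ ≥ 0 with K(t) ≤ λ₁ b̃(t), b̃(t)K(t) ≤ λ₂ ρ², and K'(t)² ≤ λ₃ b̃(t) K(t) ρ² for all t ∈ [t₁,t₂]. Define E(t) = ½( |v'(t)|² + ρ²|v(t)|² ). Then there is a constant C > 0, depending only on λ₁, λ₂, λ₃, such that for all t₁ ≤ s ≤ t ≤ t₂: ∫ₛᵗ K(θ)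 ρ² |v(θ)|² dθ ≤ C·E(s). -/
open MeasureTheory Filter

theorem aux_amgm (z a c : ℝ) (ha : 0 ≤ a) (hc : 0 ≤ c) (h : z ^ 2 ≤ 4 * (a * c)) : z ≤ a + c := by
  apply le_of_sq_le_sq _ (add_nonneg ha hc)
  nlinarith [sq_nonneg (a - c)]

theorem aux_pointwise (l₁ l₂ l₃ r b k k' x y p q : ℝ) (h1 : 0 ≤ l₁) (h2 : 0 ≤ l₂) (h3 : 0 ≤ l₃)
    (hb : 0 < b) (hk : 0 ≤ k) (e1 : k ≤ l₁ * b) (e2 : b * k ≤ l₂ * r ^ 2)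
    (e3 : k' ^ 2 ≤ l₃ * b * k * r ^ 2) :
    k * r ^ 2 * (x ^ 2 + y ^ 2) ≤
      -2 * (k' * (x * p + y * q) + k * ((p ^ 2 + q ^ 2) - r ^ 2 * (x ^ 2 + y ^ 2)
        - b * (x * p + y * q))) + 2 * (l₁ + l₂ + l₃) * (b * (p ^ 2 + q ^ 2)) := by
  have hS : (x * p + y * q) ^ 2 ≤ (x ^ 2 + y ^ 2) * (p ^ 2 + q ^ 2) := by
    nlinarith [sq_nonneg (x * q - y * p)]
  have hN : 0 ≤ x ^ 2 + y ^ 2 := by positivity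
  have hP : 0 ≤ p ^ 2 + q ^ 2 := by positivity
  generalize x * p + y * q = S at *
  generalize x ^ 2 + y ^ 2 = N at *
  generalize p ^ 2 + q ^ 2 = P at *
  have A : k * P ≤ l₁ * b * P := mul_le_mul_of_nonneg_right e1 hP
  have B : 2 * k' * S ≤ k * r ^ 2 * N / 2 + 2 * l₃ * b * P := by
    apply aux_amgm _ _ _ (by positivity) (by positivity)
    have := mul_le_mul e3 hS (by positivity) (by positivity)
    nlinarith
  have D : -(2 * b * k * S) ≤ k * r ^ 2 * N / 2 + 2 * l₂ * b * P := by
    apply aux_amgm _ _ _ (by positivity) (by positivity)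
    have h := mul_le_mul_of_nonneg_left hS (show 0 ≤ (b * k) ^ 2 by positivity)
    have h' := mul_le_mul_of_nonneg_left e2 (show 0 ≤ b * k * (N * P) by positivity)
    nlinarith
  nlinarith

theorem aux_end (l₁ l₂ r b k x y p q : ℝ) (h1 : 0 ≤ l₁) (h2 : 0 ≤ l₂) (hr : 0 < r)
    (hb : 0 < b) (hk : 0 ≤ k) (e1 : k ≤ l₁ * b) (e2 : b * k ≤ l₂ * r ^ 2) :
    |2 * k * (x * p + y * q)| ≤ (l₁ + l₂) * (1 / 2 * ((p ^ 2 + q ^ 2) + r ^ 2 * (x ^ 2 + y ^ 2))) := by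
  have hS : (x * p + y * q) ^ 2 ≤ (x ^ 2 + y ^ 2) * (p ^ 2 + q ^ 2) := by
    nlinarith [sq_nonneg (x * q - y * p)]
  have hN : 0 ≤ x ^ 2 + y ^ 2 := by positivity
  have hP : 0 ≤ p ^ 2 + q ^ 2 := by positivity
  generalize x * p + y * q = S at *
  generalize x ^ 2 + y ^ 2 = N at *
  generalize p ^ 2 + q ^ 2 = P at *
  have hkk : k ^ 2 ≤ l₁ * l₂ * r ^ 2 := by
    have a := mul_le_mul_of_nonneg_right e1 hk
    have c := mul_le_mul_of_nonneg_left e2 h1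
    nlinarith
  have hk2 : 2 * k ≤ (l₁ + l₂) * r := by
    have := aux_amgm (2 * k) (l₁ * r) (l₂ * r) (by positivity) (by positivity) (by nlinarith)
    linarith
  have hrS : |r * S| ≤ 1 / 2 * (P + r ^ 2 * N) := by
    have h := mul_le_mul_of_nonneg_left hS (show 0 ≤ r ^ 2 by positivity)
    have u := aux_amgm (r * S) (P / 2) (r ^ 2 * N / 2) (by positivity) (by positivity) (by nlinarith)
    have w := aux_amgm (-(r * S)) (P / 2) (r ^ 2 * N / 2) (by positivity) (by positivity)
      (by nlinarith)
    rw [abs_le]; constructor <;> linarith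
  rw [abs_mul, abs_of_nonneg (by positivity : 0 ≤ 2 * k)]
  rw [abs_mul, abs_of_pos hr] at hrS
  calc 2 * k * |S| ≤ (l₁ + l₂) * r * |S| := mul_le_mul_of_nonneg_right hk2 (abs_nonneg _)
    _ = (l₁ + l₂) * (r * |S|) := by ring
    _ ≤ _ := mul_le_mul_of_nonneg_left hrS (by positivity)

theorem aux_norm (z : ℂ) : ‖z‖ ^ 2 = z.re ^ 2 + z.im ^ 2 := by
  rw [Complex.sq_norm, Complex.normSq_apply]; ring

/-- Proposition `Prop:Effective-integrable-EM5-Zdiss` of the paper (Proposition 2.1 of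
[JuniordaLuzNoneffective]): an energy multiplier `K` yields the integral bound
`∫ₛᵗ K ρ² |v|² ≤ C·E(s)`. -/
theorem energy_multiplier_integral_bound
    (lam₁ lam₂ lam₃ : ℝ) (hlam₁ : 0 ≤ lam₁) (hlam₂ : 0 ≤ lam₂) (hlam₃ : 0 ≤ lam₃) :
    ∃ C : ℝ, 0 < C ∧
      ∀ (ρ : ℝ), 0 < ρ → ∀ (t₁ t₂ : ℝ), t₁ ≤ t₂ →
        ∀ (btilde : ℝ → ℝ), ContinuousOn btilde (Set.Icc t₁ t₂) →
          (∀ t ∈ Set.Icc t₁ t₂, 0 < btilde t) →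
          ∀ v : ℝ → ℂ, ContDiff ℝ 2 v →
            (∀ t ∈ Set.Icc t₁ t₂,
              deriv (deriv v) t + ((ρ ^ 2 : ℝ) : ℂ) * v t +
                ((btilde t : ℝ) : ℂ) * deriv v t = 0) →
            ∀ K : ℝ → ℝ, ContDiff ℝ 1 K → (∀ t ∈ Set.Icc t₁ t₂, 0 ≤ K t) →
              (∀ t ∈ Set.Icc t₁ t₂, K t ≤ lam₁ * btilde t) →
              (∀ t ∈ Set.Icc t₁ t₂, btilde t * K t ≤ lam₂ * ρ ^ 2) →
              (∀ t ∈ Set.Icc t₁ t₂, (deriv K t) ^ 2 ≤ lam₃ * btilde t * K t * ρ ^ 2) →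
              ∀ s t : ℝ, t₁ ≤ s → s ≤ t → t ≤ t₂ →
                (∫ θ in s..t, K θ * ρ ^ 2 * ‖v θ‖ ^ 2) ≤
                  C * ((1 / 2) * (‖deriv v s‖ ^ 2 + ρ ^ 2 * ‖v s‖ ^ 2)) := by
  refine ⟨4 * (lam₁ + lam₂ + lam₃) + 1, by positivity, ?_⟩
  intro ρ hρ t₁ t₂ _ b _ hbpos v hv hode K hK hK0 e1 e2 e3 s t hs hst ht
  have hsub : ∀ θ ∈ Set.Icc s t, θ ∈ Set.Icc t₁ t₂ := fun θ h => ⟨hs.trans h.1, h.2.trans ht⟩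
  have hvd : ∀ θ, HasDerivAt v (deriv v θ) θ := fun θ =>
    ((hv.differentiable (by norm_num)) θ).hasDerivAt
  have hv1 : ContDiff ℝ 1 (deriv v) := by
    have : ContDiff ℝ (1 + 1) v := by simpa [one_add_one_eq_two] using hv
    exact (contDiff_succ_iff_deriv.1 this).2.2
  have hvdd : ∀ θ, HasDerivAt (deriv v) (deriv (deriv v) θ) θ := fun θ =>
    ((hv1.differentiable (by norm_num)) θ).hasDerivAt
  have hKd : ∀ θ, HasDerivAt K (deriv K θ) θ := fun θ =>
    ((hK.differentiable (by norm_num)) θ).hasDerivAt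
  have hre : ∀ (f : ℝ → ℂ) (f' : ℂ) (θ : ℝ), HasDerivAt f f' θ →
      HasDerivAt (fun τ => (f τ).re) f'.re θ := fun f f' θ h =>
    Complex.reCLM.hasFDerivAt.comp_hasDerivAt θ h
  have him : ∀ (f : ℝ → ℂ) (f' : ℂ) (θ : ℝ), HasDerivAt f f' θ →
      HasDerivAt (fun τ => (f τ).im) f'.im θ := fun f f' θ h =>
    Complex.imCLM.hasFDerivAt.comp_hasDerivAt θ h
  simp only [aux_norm]
  set L := lam₁ + lam₂ + lam₃ with hL
  have hGd : ∀ θ, HasDerivAt (fun τ =>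
      -2 * (K τ * ((v τ).re * (deriv v τ).re + (v τ).im * (deriv v τ).im))
      - L * ((deriv v τ).re ^ 2 + (deriv v τ).im ^ 2 + ρ ^ 2 * ((v τ).re ^ 2 + (v τ).im ^ 2))) _ θ :=
    fun θ => by
    have x := hre _ _ θ (hvd θ)
    have y := him _ _ θ (hvd θ)
    have p := hre _ _ θ (hvdd θ)
    have q := him _ _ θ (hvdd θ)
    exact (((hKd θ).mul ((x.mul p).add (y.mul q))).const_mul (-2)).sub
      ((((p.pow 2).add (q.pow 2)).add (((x.pow 2).add (y.pow 2)).const_mul (ρ ^ 2))).const_mul L)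
  have hcv := hv.continuous
  have hcK := hK.continuous
  have key := intervalIntegral.integral_le_sub_of_hasDeriv_right_of_le hst
    (φ := fun θ => K θ * ρ ^ 2 * ((v θ).re ^ 2 + (v θ).im ^ 2))
    (fun θ _ => (hGd θ).continuousAt.continuousWithinAt)
    (fun θ _ => (hGd θ).hasDerivWithinAt)
    (Continuous.integrableOn_Icc (by fun_prop))
    (fun θ hθ => by
      have hm := hsub θ (Set.Ioo_subset_Icc_self hθ)
      have ho := hode θ hm
      have o1 := congrArg Complex.re ho
      have o2 := congrArg Complex.im ho
      simp only [Complex.add_re, Complex.add_im, Complex.re_ofReal_mul, Complex.im_ofReal_mul,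
        Complex.zero_re, Complex.zero_im] at o1 o2
      have o1' : (deriv (deriv v) θ).re = -(ρ ^ 2 * (v θ).re) - b θ * (deriv v θ).re := by linarith
      have o2' : (deriv (deriv v) θ).im = -(ρ ^ 2 * (v θ).im) - b θ * (deriv v θ).im := by linarith
      have := aux_pointwise lam₁ lam₂ lam₃ ρ (b θ) (K θ) (deriv K θ) (v θ).re (v θ).im
        (deriv v θ).re (deriv v θ).im hlam₁ hlam₂ hlam₃ (hbpos θ hm) (hK0 θ hm) (e1 θ hm)
        (e2 θ hm) (e3 θ hm)
      refine this.trans (le_of_eq ?_)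
      simp only [o1', o2', Pi.add_apply, Pi.mul_apply, Pi.pow_apply]
      push_cast
      ring)
  refine key.trans ?_
  have E : ∀ θ ∈ Set.Icc s t, _ := fun θ hθ =>
    abs_le.1 (aux_end lam₁ lam₂ ρ (b θ) (K θ) (v θ).re (v θ).im
      (deriv v θ).re (deriv v θ).im hlam₁ hlam₂ hρ (hbpos θ (hsub θ hθ)) (hK0 θ (hsub θ hθ))
      (e1 θ (hsub θ hθ)) (e2 θ (hsub θ hθ)))
  have Es := E s ⟨le_rfl, hst⟩
  have Et := E t ⟨hst, le_rfl⟩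
  have ps : 0 ≤ (deriv v s).re ^ 2 + (deriv v s).im ^ 2
    + ρ ^ 2 * ((v s).re ^ 2 + (v s).im ^ 2) := by positivity
  have pt : 0 ≤ (deriv v t).re ^ 2 + (deriv v t).im ^ 2
    + ρ ^ 2 * ((v t).re ^ 2 + (v t).im ^ 2) := by positivity
  have a1 := mul_nonneg hlam₁ ps
  have a2 := mul_nonneg hlam₂ ps
  have a3 := mul_nonneg hlam₃ ps
  have c1 := mul_nonneg hlam₁ pt
  have c2 := mul_nonneg hlam₂ pt
  have c3 := mul_nonneg hlam₃ pt
  rw [hL]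
  linarith [Es.1, Es.2, Et.1, Et.2]
end

section
/- Let n ≥ 1, ε ∈ (0,1), κ ≥ 0, a ∈ (0,1). Let b : [0,∞) → (0,∞) be C¹ and monotone with |b'(t)| ≤ a·b(t)² for all t, and let g : [0,∞) → [0,∞) be continuous. Then there is a constant C > 0, depending only on ε, κ and a (independent of ξ and of the interval), with the following property: for every ξ ∈ ℝⁿ and every interval [t₀,t₁] such that |ξ| ≤ (b(τ)/2)·√(1−ε²) and g(τ)|ξ|² ≤ κ·b(τ) for all τ ∈ [t₀,t₁], every twice continuously differentiable v : [t₀,t₁] → ℂ solving v''(t) + |ξ|²v(t) + (b(t)+g(t)|ξ|²)v'(t) = 0 satisfies, with E(t) = ½( |v'(t)|² + |ξ|²|v(t)|² ), E(t) ≤ C·exp( −(1/C)·|ξ|²·∫_{t₀}ᵗ 1/b(τ) dτ )·E(t₀) for all t ∈ [t₀,t₁]. -/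
open MeasureTheory Filter


/-- Pointwise differential inequality, with p = q b, b' = β b², B = γ b. -/
lemma ell_aux_deriv (κ a δ b q β γ X Y R : ℝ) (hκ : 0 ≤ κ) (ha : 0 ≤ a) (hδ : 0 < δ)
    (hδM : δ * (2 + (1 + κ + a) ^ 2) = 1) (hb : 0 < b) (hq : 0 ≤ q) (hqb : q ≤ b / 4)
    (hβ : |β| ≤ a) (hγ : 1 ≤ γ) (hγ' : γ ≤ 1 + κ) (hX : 0 ≤ X) (hY : 0 ≤ Y)
    (hR : |R| ≤ X * Y) :
    -(γ * b) * X ^ 2 + δ * (-(q * b * β) * R + q * (X ^ 2 - q * b * Y ^ 2 - γ * b * R)) ≤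
      -(δ * q) * ((1 / 2) * (X ^ 2 + q * b * Y ^ 2)) := by
  have hM : |-(β + γ) * R| ≤ (1 + κ + a) * (X * Y) := by
    rw [abs_mul]
    have h1 : |-(β + γ)| ≤ 1 + κ + a := by
      rw [abs_le] at hβ ⊢
      constructor <;> linarith [hβ.1, hβ.2]
    gcongr
  have hM2 := (le_abs_self _).trans hM
  set M := 1 + κ + a with hMdef
  have h2 : q * b * (-(β + γ) * R) ≤ b / 2 * (M ^ 2 * X ^ 2 + q ^ 2 * Y ^ 2) := by
    calc q * b * (-(β + γ) * R) ≤ q * b * (M * (X * Y)) := by gcongr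
      _ ≤ _ := by nlinarith [mul_nonneg hb.le (sq_nonneg (M * X - q * Y))]
  have h3 : q * X ^ 2 ≤ b / 4 * X ^ 2 := by gcongr
  have h4 : b * X ^ 2 ≤ γ * b * X ^ 2 := by
    have : 0 ≤ b * X ^ 2 := by positivity
    nlinarith
  have h5 : δ * (q * b * (-(β + γ) * R) + q * X ^ 2) ≤
      δ * (b / 2 * (M ^ 2 * X ^ 2 + q ^ 2 * Y ^ 2) + b / 4 * X ^ 2) := by gcongr; 
  have h6 : δ ≤ 1 := by nlinarith [mul_nonneg hδ.le (sq_nonneg M)]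
  have h7 : δ * q * X ^ 2 ≤ 1 * (b / 4) * X ^ 2 := by gcongr
  have h8 : δ * M ^ 2 * (b * X ^ 2) = (1 - 2 * δ) * (b * X ^ 2) := by
    congr 1; linarith
  have h9 : 0 ≤ b * X ^ 2 := by positivity
  have h10 : 0 ≤ δ * (b * X ^ 2) := by positivity
  nlinarith

lemma ell_aux_bd (δ b s X Y R : ℝ) (hδ : 0 < δ) (hδ1 : δ ≤ 1)
    (hb : 0 < b) (hs : 0 ≤ s) (hsb : s ≤ b / 2) (hX : 0 ≤ X) (hY : 0 ≤ Y)
    (hR : |R| ≤ X * Y) :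
    |δ * (s ^ 2 / b * R)| ≤ (1 / 2) * ((1 / 2) * (X ^ 2 + s ^ 2 * Y ^ 2)) := by
  have h1 : s ^ 2 / b ≤ s / 2 := by
    rw [div_le_iff₀ hb]; nlinarith
  have h0 : 0 ≤ s ^ 2 / b := by positivity
  rw [abs_mul, abs_mul, abs_of_pos hδ, abs_of_nonneg h0]
  calc δ * (s ^ 2 / b * |R|) ≤ 1 * (s / 2 * (X * Y)) := by gcongr
    _ ≤ _ := by nlinarith [sq_nonneg (X - s * Y)]

/-- Proposition `Prop:Effective-integrable-EM8-Zdiss` of the paper: exponential decay of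
the pointwise energy in the elliptic part of the dissipative zone. -/
theorem elliptic_dissipative_zone_energy_decay
    (ε κ a : ℝ) (hε : ε ∈ Set.Ioo (0 : ℝ) 1) (hκ : 0 ≤ κ) (ha : a ∈ Set.Ioo (0 : ℝ) 1) :
    ∃ C : ℝ, 0 < C ∧
      ∀ (n : ℕ), 1 ≤ n →
        ∀ b g : ℝ → ℝ, ContDiff ℝ 1 b →
          (MonotoneOn b (Set.Ici (0 : ℝ)) ∨ AntitoneOn b (Set.Ici (0 : ℝ))) →
          (∀ t : ℝ, 0 ≤ t → 0 < b t) →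
          (∀ t : ℝ, 0 ≤ t → |deriv b t| ≤ a * (b t) ^ 2) →
          Continuous g → (∀ t : ℝ, 0 ≤ t → 0 ≤ g t) →
          ∀ (ξ : EuclideanSpace ℝ (Fin n)) (t₀ t₁ : ℝ), 0 ≤ t₀ → t₀ ≤ t₁ →
            (∀ τ ∈ Set.Icc t₀ t₁, ‖ξ‖ ≤ (b τ / 2) * Real.sqrt (1 - ε ^ 2)) →
            (∀ τ ∈ Set.Icc t₀ t₁, g τ * ‖ξ‖ ^ 2 ≤ κ * b τ) →
            ∀ v : ℝ → ℂ, ContDiff ℝ 2 v →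
              (∀ τ ∈ Set.Icc t₀ t₁,
                deriv (deriv v) τ + ((‖ξ‖ ^ 2 : ℝ) : ℂ) * v τ +
                  ((b τ + g τ * ‖ξ‖ ^ 2 : ℝ) : ℂ) * deriv v τ = 0) →
              ∀ t ∈ Set.Icc t₀ t₁,
                (1 / 2) * (‖deriv v t‖ ^ 2 + ‖ξ‖ ^ 2 * ‖v t‖ ^ 2) ≤
                  C * Real.exp (-(1 / C) * ‖ξ‖ ^ 2 * ∫ τ in t₀..t, (b τ)⁻¹) *
                    ((1 / 2) * (‖deriv v t₀‖ ^ 2 + ‖ξ‖ ^ 2 * ‖v t₀‖ ^ 2)) := by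
  obtain ⟨hε0, hε1⟩ := hε
  obtain ⟨ha0, ha1⟩ := ha
  set D : ℝ := 2 + (1 + κ + a) ^ 2 with hD
  have hD2 : 2 ≤ D := by rw [hD]; nlinarith [sq_nonneg (1 + κ + a)]
  have hD0 : 0 < D := by linarith
  refine ⟨3 * D, by positivity, ?_⟩
  intro n _ b g hb _ hbpos hb' hg hgpos ξ t₀ t₁ ht₀ ht₀₁ hell hgk v hv hode t ht
  set s : ℝ := ‖ξ‖ with hs
  have hs0 : 0 ≤ s := norm_nonneg _
  set δ : ℝ := D⁻¹ with hδ
  have hδ0 : 0 < δ := by positivity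
  have hδD : δ * D = 1 := inv_mul_cancel₀ hD0.ne'
  have hδ1 : δ ≤ 1 := by nlinarith
  have hpos : ∀ τ ∈ Set.Icc t₀ t₁, 0 < b τ := fun τ hτ => hbpos τ (ht₀.trans hτ.1)
  have hsb : ∀ τ ∈ Set.Icc t₀ t₁, s ≤ b τ / 2 := by
    intro τ hτ
    refine (hell τ hτ).trans ?_
    have h1 : Real.sqrt (1 - ε ^ 2) ≤ 1 := by
      refine Real.sqrt_le_iff.2 ⟨by norm_num, ?_⟩; nlinarith
    have := hpos τ hτ
    nlinarith
  have hbc : Continuous b := hb.continuous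
  -- the solution
  have hv1 : ∀ τ, HasDerivAt v (deriv v τ) τ := fun τ =>
    (hv.differentiable (by norm_num) τ).hasDerivAt
  have hv2 : ∀ τ, HasDerivAt (deriv v) (deriv (deriv v) τ) τ := by
    have hd : ContDiff ℝ 1 (deriv v) := by
      have : ContDiff ℝ (1 + 1) v := by simpa [one_add_one_eq_two] using hv
      exact (contDiff_succ_iff_deriv.1 this).2.2
    exact fun τ => (hd.differentiable (by norm_num) τ).hasDerivAt
  have hbd : ∀ τ, HasDerivAt b (deriv b τ) τ := fun τ =>
    (hb.differentiable (by norm_num) τ).hasDerivAt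
  set E : ℝ → ℝ := fun τ => (1 / 2) * (‖deriv v τ‖ ^ 2 + s ^ 2 * ‖v τ‖ ^ 2) with hE
  set R : ℝ → ℝ := fun τ => inner ℝ (deriv v τ) (v τ) with hRdef
  set L : ℝ → ℝ := fun τ => E τ + δ * (s ^ 2 / b τ * R τ) with hL
  set I : ℝ → ℝ := fun τ => ∫ x in t₀..τ, (b x)⁻¹ with hI
  have hR : ∀ τ, |R τ| ≤ ‖deriv v τ‖ * ‖v τ‖ := fun τ => abs_real_inner_le_norm _ _
  have hE0 : ∀ τ, 0 ≤ E τ := fun τ => by simp only [hE]; positivity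
  have hLE : ∀ τ ∈ Set.Icc t₀ t₁, |δ * (s ^ 2 / b τ * R τ)| ≤ (1 / 2) * E τ := fun τ hτ =>
    ell_aux_bd δ (b τ) s _ _ (R τ) hδ0 hδ1 (hpos τ hτ) hs0 (hsb τ hτ) (norm_nonneg _)
      (norm_nonneg _) (hR τ)
  have hId : ∀ τ ∈ Set.Icc t₀ t₁, HasDerivAt I (b τ)⁻¹ τ := by
    intro τ hτ
    apply intervalIntegral.integral_hasDerivAt_right
    · apply ContinuousOn.intervalIntegrable
      rw [Set.uIcc_of_le hτ.1]
      exact hbc.continuousOn.inv₀ fun x hx => (hpos x ⟨hx.1, hx.2.trans hτ.2⟩).ne'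
    · exact (hbc.measurable.inv).stronglyMeasurable.stronglyMeasurableAtFilter
    · exact hbc.continuousAt.inv₀ (hpos τ hτ).ne'
  have hLd : ∀ τ ∈ Set.Icc t₀ t₁, ∃ L', HasDerivAt L L' τ ∧
      L' ≤ -(δ * (s ^ 2 / b τ)) * E τ := by
    intro τ hτ
    have hbτ := hpos τ hτ
    have hode' : deriv (deriv v) τ =
        -((s ^ 2) • v τ) - (b τ + g τ * s ^ 2) • deriv v τ := by
      have := hode τ hτ
      rw [Complex.real_smul, Complex.real_smul]
      linear_combination this
    have d1 := (((hv2 τ).norm_sq.add ((hv1 τ).norm_sq.const_mul (s ^ 2))).const_mul (1 / 2)).add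
      (((((hbd τ).inv hbτ.ne').const_mul (s ^ 2)).mul
        ((hv2 τ).inner ℝ (hv1 τ))).const_mul δ)
    refine ⟨_, d1.congr_of_eventuallyEq (Filter.Eventually.of_forall fun x => ?_), ?_⟩
    · simp [hL, hE, hRdef, div_eq_mul_inv]
    · have hq : s ^ 2 / b τ * b τ = s ^ 2 := by field_simp
      have hB : (b τ + g τ * s ^ 2) / b τ * b τ = b τ + g τ * s ^ 2 := by field_simp
      have hβ : deriv b τ / b τ ^ 2 * b τ ^ 2 = deriv b τ := by field_simp
      have hg0 : 0 ≤ g τ * s ^ 2 := mul_nonneg (hgpos τ (ht₀.trans hτ.1)) (sq_nonneg s)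
      have key := ell_aux_deriv κ a δ (b τ) (s ^ 2 / b τ) (deriv b τ / b τ ^ 2)
        ((b τ + g τ * s ^ 2) / b τ) ‖deriv v τ‖ ‖v τ‖ (R τ) hκ ha0.le hδ0 hδD hbτ
        (by positivity)
        (by rw [div_le_iff₀ hbτ]; nlinarith [hsb τ hτ])
        (by
          rw [abs_div, abs_of_pos (pow_pos hbτ 2), div_le_iff₀ (pow_pos hbτ 2)]
          exact hb' τ (ht₀.trans hτ.1))
        (by rw [le_div_iff₀ hbτ]; linarith)
        (by rw [div_le_iff₀ hbτ]; linarith [hgk τ hτ])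
        (norm_nonneg _) (norm_nonneg _) (hR τ)
      rw [hq, hB] at key
      refine le_of_eq_of_le ?_ key
      rw [hode']
      have e1 : (inner ℝ (deriv v τ) (v τ) : ℝ) = R τ := rfl
      have e2 : (inner ℝ (v τ) (deriv v τ) : ℝ) = R τ := real_inner_comm _ _
      simp only [inner_sub_left, inner_sub_right, inner_neg_left, inner_neg_right,
        real_inner_smul_left, real_inner_smul_right, real_inner_self_eq_norm_sq, e1, e2]
      simp only [Pi.inv_apply]
      field_simp
      ring
  -- the weighted functional is antitone
  set c : ℝ := 2 / 3 * δ * s ^ 2 with hc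
  have hFd : ∀ τ ∈ Set.Icc t₀ t₁, ∃ F', HasDerivAt (fun x => L x * Real.exp (c * I x)) F' τ ∧
      F' ≤ 0 := by
    intro τ hτ
    obtain ⟨L', hL', hle⟩ := hLd τ hτ
    refine ⟨_, hL'.mul ((hId τ hτ).const_mul c).exp, ?_⟩
    have hbτ := hpos τ hτ
    have h1 : L τ ≤ 3 / 2 * E τ := by
      have := (abs_le.1 (hLE τ hτ)).2
      simp only [hL]; linarith
    have h2 : c * (b τ)⁻¹ * L τ ≤ c * (b τ)⁻¹ * (3 / 2 * E τ) := by
      have : 0 ≤ c * (b τ)⁻¹ := by positivity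
      gcongr
    have h3 : c * (b τ)⁻¹ * (3 / 2 * E τ) = δ * (s ^ 2 / b τ) * E τ := by
      rw [hc, div_eq_mul_inv]; ring
    have h4 : L' + c * (b τ)⁻¹ * L τ ≤ 0 := by linarith
    have h5 := mul_nonpos_of_nonpos_of_nonneg h4 (Real.exp_pos (c * I τ)).le
    linarith
  have hanti : AntitoneOn (fun x => L x * Real.exp (c * I x)) (Set.Icc t₀ t₁) := by
    apply antitoneOn_of_deriv_nonpos (convex_Icc _ _)
    · intro τ hτ
      obtain ⟨F', h, _⟩ := hFd τ hτ
      exact h.continuousAt.continuousWithinAt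
    · intro τ hτ
      obtain ⟨F', h, _⟩ := hFd τ (interior_subset hτ)
      exact h.differentiableAt.differentiableWithinAt
    · intro τ hτ
      obtain ⟨F', h, h'⟩ := hFd τ (interior_subset hτ)
      rw [h.deriv]; exact h'
  have ht0 : t₀ ∈ Set.Icc t₀ t₁ := ⟨le_rfl, ht₀₁⟩
  have hfin := hanti ht0 ht ht.1
  have hI0 : I t₀ = 0 := by simp [hI]
  simp only [hI0, mul_zero, Real.exp_zero, mul_one] at hfin
  have hIt : 0 ≤ I t := by
    apply intervalIntegral.integral_nonneg ht.1
    intro x hx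
    exact (inv_pos.2 (hpos x ⟨hx.1, hx.2.trans ht.2⟩)).le
  have h1 : E t ≤ 2 * L t := by
    have := (abs_le.1 (hLE t ht)).1
    simp only [hL]; linarith
  have h2 : L t₀ ≤ 3 / 2 * E t₀ := by
    have := (abs_le.1 (hLE t₀ ht0)).2
    simp only [hL]; linarith
  have h3 : L t ≤ L t₀ * Real.exp (-(c * I t)) := by
    rw [Real.exp_neg, ← div_eq_mul_inv, le_div_iff₀ (Real.exp_pos _)]; exact hfin
  have h4 : Real.exp (-(c * I t)) ≤ Real.exp (-(1 / (3 * D)) * s ^ 2 * I t) := by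
    apply Real.exp_le_exp.2
    have e : -(1 / (3 * D)) * s ^ 2 * I t = -(1 / 3 * (δ * s ^ 2 * I t)) := by
      rw [hδ]; field_simp
    have : 0 ≤ δ * s ^ 2 * I t := by positivity
    rw [e, hc]; linarith
  change E t ≤ 3 * D * Real.exp (-(1 / (3 * D)) * s ^ 2 * I t) * E t₀
  calc E t ≤ 2 * L t := h1
    _ ≤ 2 * (L t₀ * Real.exp (-(c * I t))) := by gcongr
    _ ≤ 2 * (3 / 2 * E t₀ * Real.exp (-(1 / (3 * D)) * s ^ 2 * I t)) := by
        have := hE0 t₀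
        gcongr
    _ = 3 * 1 * Real.exp (-(1 / (3 * D)) * s ^ 2 * I t) * E t₀ := by ring
    _ ≤ _ := by
        have := hE0 t₀
        gcongr
        linarith
end

section
/- Let n ≥ 1 and take b(t) = e^t, g(t) = ½e^{−t} (so b(t)g(t) = ½), and set ε₁ = 11/10, ε₂ = 9/10. Then there is a constant C > 0 such that for every ξ ∈ ℝⁿ, every 0 ≤ s ≤ t with ε₂ ≤ ½e^{−τ}|ξ| ≤ ε₁ for all τ ∈ [s,t], and every twice continuously differentiable v : [s,t] → ℂ satisfying v''(τ) + |ξ|²v(τ) + (e^τ + ½e^{−τ}|ξ|²)v'(τ) = 0 on [s,t], one has |ξ||v(t)| ≤ C·exp( −½∫ₛᵗ (e^τ + ½e^{−τ}|ξ|²) dτ )·( |ξ||v(s)| + |v'(s)| ) and |v'(t)| ≤ C·exp( −½∫ₛᵗ (e^τ + ½e^{−τ}|ξ|²) dτ )·( |ξ||v(s)| + |v'(s)| ). -/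
open MeasureTheory Filter

/-- Pointwise bounds on the damping coefficient in the hyperbolic zone. -/
lemma zone_bounds (r τ : ℝ) (h1 : (9 : ℝ) / 10 ≤ (1 / 2) * Real.exp (-τ) * r)
    (h2 : (1 / 2) * Real.exp (-τ) * r ≤ 11 / 10) :
    0 < r ∧ 9 / 5 * Real.exp τ ≤ r ∧ r ≤ 11 / 5 * Real.exp τ ∧
    9 / 10 * r ≤ (1 / 2) * Real.exp (-τ) * r ^ 2 ∧
    (1 / 2) * Real.exp (-τ) * r ^ 2 ≤ 11 / 10 * r := by
  have hP := Real.exp_pos τ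
  have hPQ : Real.exp τ * Real.exp (-τ) = 1 := by rw [← Real.exp_add]; simp
  have e : Real.exp τ * ((1 / 2) * Real.exp (-τ) * r) = r / 2 := by
    linear_combination (r / 2) * hPQ
  have k1 := mul_le_mul_of_nonneg_left h1 hP.le
  have k2 := mul_le_mul_of_nonneg_left h2 hP.le
  rw [e] at k1 k2
  have hr : 0 < r := by linarith
  have k3 := mul_le_mul_of_nonneg_right h1 hr.le
  have k4 := mul_le_mul_of_nonneg_right h2 hr.le
  refine ⟨hr, by linarith, by linarith, by linarith, by linarith⟩

/-- The algebraic energy inequality. -/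
lemma energy_ineq (r a d x w : ℝ) (hr : 0 < r) (ha0 : 0 ≤ a) (ha : a ≤ 83 / 100 * r)
    (hd1 : -(2 / 5) * r ≤ d) (hd2 : d ≤ 0) :
    2 * d * (x * w) - 2 * a * d * x ^ 2 ≤ 3 * (w ^ 2 + (r ^ 2 - a ^ 2) * x ^ 2) := by
  have h1 : 2 * d * (x * w) ≤ w ^ 2 + d ^ 2 * x ^ 2 := by nlinarith [sq_nonneg (w - d * x)]
  have hd : d ^ 2 ≤ 4 / 25 * r ^ 2 := by nlinarith
  have ha2 : a ^ 2 ≤ 69 / 100 * r ^ 2 := by nlinarith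
  have had : -(2 * a * d) ≤ 67 / 100 * r ^ 2 := by
    have : a * (-d) ≤ (83 / 100 * r) * (2 / 5 * r) :=
      mul_le_mul ha (by linarith) (by linarith) (by positivity)
    nlinarith
  have h3 : (d ^ 2 - 2 * a * d) * x ^ 2 ≤ (3 * (r ^ 2 - a ^ 2)) * x ^ 2 :=
    mul_le_mul_of_nonneg_right (by nlinarith) (sq_nonneg x)
  nlinarith [sq_nonneg w]

lemma scalar_estimate (r s t : ℝ) (hst : s ≤ t)
    (hz : ∀ τ ∈ Set.Icc s t, (9 : ℝ) / 10 ≤ (1 / 2) * Real.exp (-τ) * r ∧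
            (1 / 2) * Real.exp (-τ) * r ≤ 11 / 10)
    (x y z : ℝ → ℝ) (hx : ∀ τ, HasDerivAt x (y τ) τ) (hy : ∀ τ, HasDerivAt y (z τ) τ)
    (hode : ∀ τ ∈ Set.Icc s t, z τ + r ^ 2 * x τ +
      (Real.exp τ + (1 / 2) * Real.exp (-τ) * r ^ 2) * y τ = 0)
    (A : ℝ → ℝ) (hA : A = fun τ => (Real.exp τ - (1 / 2) * Real.exp (-τ) * r ^ 2) / 2) :
    r ^ 2 * x t ^ 2 ≤ 36 * Real.exp (-(A t - A s)) ^ 2 * (r ^ 2 * x s ^ 2 + y s ^ 2) ∧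
    y t ^ 2 ≤ 36 * Real.exp (-(A t - A s)) ^ 2 * (r ^ 2 * x s ^ 2 + y s ^ 2) := by
  set a : ℝ → ℝ := fun τ => (Real.exp τ + (1 / 2) * Real.exp (-τ) * r ^ 2) / 2 with hadef
  have hexpn : ∀ τ : ℝ, HasDerivAt (fun τ : ℝ => Real.exp (-τ)) (-Real.exp (-τ)) τ := fun τ => by
    simpa using (hasDerivAt_neg τ).exp
  have hAd : ∀ τ, HasDerivAt A (a τ) τ := fun τ => by
    rw [hA]
    refine HasDerivAt.congr_deriv
      (((Real.hasDerivAt_exp τ).sub (((hexpn τ).const_mul (1 / 2)).mul_const (r ^ 2))).div_const 2) ?_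
    simp only [hadef]; ring
  have had : ∀ τ, HasDerivAt a (A τ) τ := fun τ => by
    rw [hadef]
    refine HasDerivAt.congr_deriv
      (((Real.hasDerivAt_exp τ).add (((hexpn τ).const_mul (1 / 2)).mul_const (r ^ 2))).div_const 2) ?_
    simp only [hA]; ring
  have hb : ∀ τ ∈ Set.Icc s t, 0 < r ∧ 0 ≤ a τ ∧ a τ ≤ 83 / 100 * r ∧ -(2 / 5) * r ≤ A τ ∧
      A τ ≤ 0 := fun τ hτ => by
    obtain ⟨h1, h2, h3, h4, h5⟩ := zone_bounds r τ (hz τ hτ).1 (hz τ hτ).2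
    have := Real.exp_pos τ
    simp only [hadef, hA]
    refine ⟨h1, ?_, ?_, ?_, ?_⟩ <;> linarith
  set F : ℝ → ℝ := fun τ => (y τ + a τ * x τ) ^ 2 + (r ^ 2 - a τ ^ 2) * x τ ^ 2 with hF
  set G : ℝ → ℝ := fun τ => Real.exp (2 * A τ - 3 * τ) * F τ with hG
  have hGd : ∀ τ, HasDerivAt G (Real.exp (2 * A τ - 3 * τ) * (2 * a τ - 3) * F τ +
      Real.exp (2 * A τ - 3 * τ) * (2 * (y τ + a τ * x τ) * (z τ + (A τ * x τ + a τ * y τ)) +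
        (-(2 * a τ * A τ) * x τ ^ 2 + (r ^ 2 - a τ ^ 2) * (2 * x τ * y τ)))) τ := fun τ => by
    have e1 := (((hAd τ).const_mul 2).sub ((hasDerivAt_id τ).const_mul 3)).exp
    have e2 := ((hy τ).add ((had τ).mul (hx τ))).pow 2
    have e3 := (((had τ).pow 2).const_sub (r ^ 2)).mul ((hx τ).pow 2)
    refine HasDerivAt.congr_deriv (e1.mul (e2.add e3)) ?_
    simp [hF]
  have hanti : AntitoneOn G (Set.Icc s t) := by
    apply antitoneOn_of_deriv_nonpos (convex_Icc s t)
    · exact fun τ _ => (hGd τ).continuousAt.continuousWithinAt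
    · exact fun τ _ => (hGd τ).differentiableAt.differentiableWithinAt
    · intro τ hτ
      have hτ' := interior_subset hτ
      rw [(hGd τ).deriv]
      obtain ⟨h1, h2, h3, h4, h5⟩ := hb τ hτ'
      have key := energy_ineq r (a τ) (A τ) (x τ) (y τ + a τ * x τ) h1 h2 h3 h4 h5
      have ho := hode τ hτ'
      have hz' : z τ = -(r ^ 2 * x τ) - 2 * a τ * y τ := by
        simp only [hadef]; linarith
      rw [mul_assoc, ← mul_add]
      apply mul_nonpos_of_nonneg_of_nonpos (Real.exp_pos _).le
      rw [hz']
      simp only [hF]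
      linarith
  have hs : s ∈ Set.Icc s t := ⟨le_rfl, hst⟩
  have ht : t ∈ Set.Icc s t := ⟨hst, le_rfl⟩
  have hle : G t ≤ G s := hanti hs ht hst
  obtain ⟨hr, a0, a1, -, -⟩ := hb s hs
  obtain ⟨-, b0, b1, -, -⟩ := hb t ht
  have hexp3 : Real.exp (t - s) ^ 3 ≤ 2 := by
    have h1 := (zone_bounds r s (hz s hs).1 (hz s hs).2).2.2.1
    have h2 := (zone_bounds r t (hz t ht).1 (hz t ht).2).2.1
    have : Real.exp (t - s) ≤ 11 / 9 := by
      rw [Real.exp_sub, div_le_iff₀ (Real.exp_pos s)]; linarith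
    calc Real.exp (t - s) ^ 3 ≤ (11 / 9) ^ 3 := by gcongr
      _ ≤ 2 := by norm_num
  have hFt : F t = Real.exp (-(2 * A t - 3 * t)) * G t := by
    simp only [hG]
    rw [← mul_assoc, ← Real.exp_add]; simp
  have hFs0 : 0 ≤ F s := by
    have : 0 ≤ r ^ 2 - a s ^ 2 := by nlinarith
    simp only [hF]; positivity
  have hFle : F t ≤ 2 * Real.exp (-(A t - A s)) ^ 2 * F s := by
    have e : Real.exp (-(2 * A t - 3 * t)) * Real.exp (2 * A s - 3 * s) =
        Real.exp (t - s) ^ 3 * Real.exp (-(A t - A s)) ^ 2 := by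
      rw [← Real.exp_nat_mul, ← Real.exp_nat_mul, ← Real.exp_add, ← Real.exp_add]
      congr 1; push_cast; ring
    calc F t ≤ Real.exp (-(2 * A t - 3 * t)) * G s := by rw [hFt]; gcongr
      _ = Real.exp (t - s) ^ 3 * Real.exp (-(A t - A s)) ^ 2 * F s := by
        rw [← e]; simp only [hG]; ring
      _ ≤ _ := by gcongr
  have hFs : F s ≤ 3 * (r ^ 2 * x s ^ 2 + y s ^ 2) := by
    simp only [hF]
    have : a s ^ 2 * x s ^ 2 ≤ r ^ 2 * x s ^ 2 :=
      mul_le_mul_of_nonneg_right (by nlinarith) (sq_nonneg _)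
    nlinarith [sq_nonneg (y s - a s * x s), sq_nonneg (y s), sq_nonneg (a s * x s)]
  have hlow : a t ^ 2 * x t ^ 2 ≤ 69 / 100 * (r ^ 2 * x t ^ 2) := by
    rw [← mul_assoc]
    exact mul_le_mul_of_nonneg_right (by nlinarith) (sq_nonneg _)
  have hup : F t ≤ 6 * Real.exp (-(A t - A s)) ^ 2 * (r ^ 2 * x s ^ 2 + y s ^ 2) := by
    calc F t ≤ _ := hFle
      _ ≤ 2 * Real.exp (-(A t - A s)) ^ 2 * (3 * (r ^ 2 * x s ^ 2 + y s ^ 2)) := by gcongr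
      _ = _ := by ring
  have hx2 : 0 ≤ r ^ 2 * x t ^ 2 := by positivity
  have hFte : F t = (y t + a t * x t) ^ 2 + r ^ 2 * x t ^ 2 - a t ^ 2 * x t ^ 2 := by
    simp only [hF]; ring
  constructor
  · nlinarith [sq_nonneg (y t + a t * x t)]
  · nlinarith [sq_nonneg (y t + a t * x t), sq_nonneg (y t + 2 * (a t * x t))]

/-- Proposition `Prop:Overdamping-Integrable-Zhyp` of the paper: hyperbolic-zone
estimates for the over-damping model with `b(t) = eᵗ`, `g(t) = ½e^(-t)`, where the
hyperbolic zone is `{(t,ξ) : 9/10 ≤ g(t)|ξ| ≤ 11/10}`. -/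
theorem overdamping_hyperbolic_zone_estimate (n : ℕ) (hn : 1 ≤ n) :
    ∃ C : ℝ, 0 < C ∧
      ∀ (ξ : EuclideanSpace ℝ (Fin n)) (s t : ℝ), 0 ≤ s → s ≤ t →
        (∀ τ ∈ Set.Icc s t,
          (9 : ℝ) / 10 ≤ (1 / 2) * Real.exp (-τ) * ‖ξ‖ ∧
            (1 / 2) * Real.exp (-τ) * ‖ξ‖ ≤ 11 / 10) →
        ∀ v : ℝ → ℂ, ContDiff ℝ 2 v →
          (∀ τ ∈ Set.Icc s t,
            deriv (deriv v) τ + ((‖ξ‖ ^ 2 : ℝ) : ℂ) * v τ +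
              ((Real.exp τ + (1 / 2) * Real.exp (-τ) * ‖ξ‖ ^ 2 : ℝ) : ℂ) * deriv v τ = 0) →
          ‖ξ‖ * ‖v t‖ ≤
              C * Real.exp (-(1 / 2) *
                  ∫ τ in s..t, (Real.exp τ + (1 / 2) * Real.exp (-τ) * ‖ξ‖ ^ 2)) *
                (‖ξ‖ * ‖v s‖ + ‖deriv v s‖) ∧
            ‖deriv v t‖ ≤
              C * Real.exp (-(1 / 2) *
                  ∫ τ in s..t, (Real.exp τ + (1 / 2) * Real.exp (-τ) * ‖ξ‖ ^ 2)) *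
                (‖ξ‖ * ‖v s‖ + ‖deriv v s‖) := by
  refine ⟨6, by norm_num, ?_⟩
  intro ξ s t _ hst hz v hv hode
  set r := ‖ξ‖ with hr
  have hr0 : 0 ≤ r := norm_nonneg ξ
  set A : ℝ → ℝ := fun τ => (Real.exp τ - (1 / 2) * Real.exp (-τ) * r ^ 2) / 2 with hA
  have hint : -(1 / 2) * ∫ τ in s..t, (Real.exp τ + (1 / 2) * Real.exp (-τ) * r ^ 2) =
      -(A t - A s) := by
    have : ∫ τ in s..t, (Real.exp τ + (1 / 2) * Real.exp (-τ) * r ^ 2) =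
        2 * A t - 2 * A s := by
      apply intervalIntegral.integral_eq_sub_of_hasDerivAt (f := fun τ => 2 * A τ)
      · intro τ _
        have hn : HasDerivAt (fun τ : ℝ => Real.exp (-τ)) (-Real.exp (-τ)) τ := by
          simpa using (hasDerivAt_neg τ).exp
        refine HasDerivAt.congr_deriv ((((Real.hasDerivAt_exp τ).sub
          ((hn.const_mul (1 / 2)).mul_const (r ^ 2))).div_const 2).const_mul 2) ?_
        ring
      · apply Continuous.intervalIntegrable
        fun_prop
    rw [this]; ring
  rw [hint]
  have hv1 : ∀ τ, HasDerivAt v (deriv v τ) τ := fun τ =>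
    (hv.differentiable (by norm_num) τ).hasDerivAt
  have hv' : ContDiff ℝ 1 (deriv v) := by
    have : ContDiff ℝ (1 + 1) v := by simpa [one_add_one_eq_two] using hv
    exact (contDiff_succ_iff_deriv.1 this).2.2
  have hv2 : ∀ τ, HasDerivAt (deriv v) (deriv (deriv v) τ) τ := fun τ =>
    (hv'.differentiable (by norm_num) τ).hasDerivAt
  have hre : ∀ (f : ℝ → ℂ) (f' : ℂ) (τ : ℝ), HasDerivAt f f' τ →
      HasDerivAt (fun τ => (f τ).re) f'.re τ := fun f f' τ h =>
    Complex.reCLM.hasFDerivAt.comp_hasDerivAt τ h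
  have him : ∀ (f : ℝ → ℂ) (f' : ℂ) (τ : ℝ), HasDerivAt f f' τ →
      HasDerivAt (fun τ => (f τ).im) f'.im τ := fun f f' τ h =>
    Complex.imCLM.hasFDerivAt.comp_hasDerivAt τ h
  obtain ⟨p1, p2⟩ := scalar_estimate r s t hst hz (fun τ => (v τ).re) (fun τ => (deriv v τ).re)
    (fun τ => (deriv (deriv v) τ).re) (fun τ => hre _ _ τ (hv1 τ)) (fun τ => hre _ _ τ (hv2 τ))
    (fun τ hτ => by
      have h := congrArg Complex.re (hode τ hτ)
      rw [Complex.add_re, Complex.add_re, Complex.re_ofReal_mul, Complex.re_ofReal_mul,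
        Complex.zero_re] at h
      exact h) A hA
  obtain ⟨q1, q2⟩ := scalar_estimate r s t hst hz (fun τ => (v τ).im) (fun τ => (deriv v τ).im)
    (fun τ => (deriv (deriv v) τ).im) (fun τ => him _ _ τ (hv1 τ)) (fun τ => him _ _ τ (hv2 τ))
    (fun τ hτ => by
      have h := congrArg Complex.im (hode τ hτ)
      rw [Complex.add_im, Complex.add_im, Complex.im_ofReal_mul, Complex.im_ofReal_mul,
        Complex.zero_im] at h
      exact h) A hA
  have hn : ∀ w : ℂ, ‖w‖ ^ 2 = w.re ^ 2 + w.im ^ 2 := fun w => by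
    rw [Complex.sq_norm, Complex.normSq_apply]; ring
  set D := Real.exp (-(A t - A s))
  have hD : 0 < D := Real.exp_pos _
  have hS : r ^ 2 * ‖v s‖ ^ 2 + ‖deriv v s‖ ^ 2 ≤ (r * ‖v s‖ + ‖deriv v s‖) ^ 2 := by
    have : 0 ≤ r * ‖v s‖ * ‖deriv v s‖ := by positivity
    nlinarith
  have hS2 : 36 * D ^ 2 * (r ^ 2 * ‖v s‖ ^ 2 + ‖deriv v s‖ ^ 2) ≤
      (6 * D * (r * ‖v s‖ + ‖deriv v s‖)) ^ 2 := by
    calc _ ≤ 36 * D ^ 2 * (r * ‖v s‖ + ‖deriv v s‖) ^ 2 := by gcongr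
      _ = _ := by ring
  rw [hn, hn] at hS2
  constructor
  · refine abs_le_of_sq_le_sq' ?_ (by positivity) |>.2
    refine le_trans ?_ hS2
    rw [mul_pow, hn]
    linarith
  · refine abs_le_of_sq_le_sq' ?_ (by positivity) |>.2
    refine le_trans ?_ hS2
    rw [hn]
    linarith
end
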